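/- Recursive evaluation of the (p,q)-blossom from control points: let n ≥ 1, let p, q be reals with 0 < q < p, let P_0, …, P_n be reals, let S(t) = Σ_{i=0}^{n} P_i B_i^n(t;p,q), and let s : ℝ^n → ℝ be the (p,q)-blossom of S. Define functions Q_i^k of k real variables by Q_i^0 = P_i for i = 0, …, n, and Q_i^{k+1}(u_1, …, u_{k+1}) = (1 − u_{k+1} p^{i+1−n} q^{−i}) Q_i^k(u_1, …, u_k) + u_{k+1} p^{i+1−n} q^{−i} Q_{i+1}^k(u_1, …, u_k) for k = 0, …, n−1 and i = 0, …, n−k−1. Then for all k = 0, …, n and i = 0, …, n−k, Q_i^k(u_1, …, u_k) = s(0, …, 0, p^{n−1}, p^{n−2}q, …, p^{n−i}q^{i−1}, u_1, …, u_k), where the first n−k−i arguments are 0; in particular Q_0^n(u_1, …, u_n) = s(u_1, …, u_n). -/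

import Mathlib

/-- The (p,q)-integer `[n]_{p,q} = Σ_{j=0}^{n-1} p^{n-1-j} q^j`. -/
noncomputable def pqInt (p q : ℝ) (n : ℕ) : ℝ :=
  ∑ j ∈ Finset.range n, p ^ (n - 1 - j) * q ^ j

/-- The (p,q)-factorial `[n]_{p,q}! = ∏_{j=1}^{n} [j]_{p,q}`. -/
noncomputable def pqFact (p q : ℝ) : ℕ → ℝ
  | 0 => 1
  | n + 1 => pqFact p q n * pqInt p q (n + 1)

/-- The (p,q)-binomial coefficient `[n choose k]_{p,q}`. -/
noncomputable def pqBinom (p q : ℝ) (n k : ℕ) : ℝ :=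
  pqFact p q n / (pqFact p q k * pqFact p q (n - k))

/-- The (p,q)-Bernstein basis function
`B_k^n(t;p,q) = p^{k(k-1)/2 - n(n-1)/2} [n choose k]_{p,q} t^k ∏_{s=0}^{n-k-1} (p^s - q^s t)`. -/
noncomputable def pqBernstein (p q : ℝ) (n k : ℕ) (t : ℝ) : ℝ :=
  p ^ (k * (k - 1) / 2) / p ^ (n * (n - 1) / 2) * pqBinom p q n k * t ^ k *
    ∏ s ∈ Finset.range (n - k), (p ^ s - q ^ s * t)

/-- The `k`-th elementary symmetric polynomial in `n` variables:
`φ_{n,k}(u_1, …, u_n) = Σ_{1 ≤ i_1 < … < i_k ≤ n} u_{i_1} ⋯ u_{i_k}`. -/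
noncomputable def esymmEval (n k : ℕ) (u : Fin n → ℝ) : ℝ :=
  ∑ S ∈ Finset.powersetCard k (Finset.univ : Finset (Fin n)), ∏ i ∈ S, u i

/-- A function `f : ℝ^n → ℝ` is symmetric if it is invariant under all permutations
of its arguments. -/
def IsSymmetricFn (n : ℕ) (f : (Fin n → ℝ) → ℝ) : Prop :=
  ∀ (σ : Equiv.Perm (Fin n)) (u : Fin n → ℝ), f (fun i => u (σ i)) = f u

/-- A function `f : ℝ^n → ℝ` is multiaffine if, fixing all variables except the `j`-th,
the resulting one-variable function is affine (degree at most one). -/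
def IsMultiaffine (n : ℕ) (f : (Fin n → ℝ) → ℝ) : Prop :=
  ∀ (j : Fin n) (u : Fin n → ℝ), ∃ a b : ℝ,
    ∀ x : ℝ, f (Function.update u j x) = a * x + b

/-- Evaluate a function of `n` variables on a multiset (via a list of its elements). -/
noncomputable def evalMs (n : ℕ) (s : (Fin n → ℝ) → ℝ) (M : Multiset ℝ) : ℝ :=
  s (fun j => M.toList.getD (j : ℕ) 0)

theorem symm_of_map_eq {n : ℕ} {s : (Fin n → ℝ) → ℝ} (hsym : IsSymmetricFn n s)
    (f g : Fin n → ℝ)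
    (h : (Finset.univ : Finset (Fin n)).val.map f = (Finset.univ : Finset (Fin n)).val.map g) :
    s f = s g := by
  classical
  have hc : ∀ a : ℝ, Nonempty ({i // f i = a} ≃ {i // g i = a}) := by
    intro a
    apply Fintype.card_eq.1
    have h1 := congrArg (Multiset.count a) h
    rw [Multiset.count_map, Multiset.count_map, ← Finset.filter_val, ← Finset.filter_val,
      Finset.card_val, Finset.card_val] at h1
    rw [Fintype.card_subtype, Fintype.card_subtype]
    simpa only [eq_comm] using h1
  have hm : ∀ i, g (Equiv.ofFiberEquiv (fun a => (hc a).some) i) = f i :=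
    fun i => Equiv.ofFiberEquiv_map _ i
  rw [← hsym (Equiv.ofFiberEquiv (fun a => (hc a).some)) g]
  congr 1
  funext i
  exact (hm i).symm

theorem map_toList {n : ℕ} (M : Multiset ℝ) (hM : M.card = n) :
    (Finset.univ : Finset (Fin n)).val.map (fun j : Fin n => M.toList.getD (j : ℕ) 0) = M := by
  rw [Fin.univ_val_map]
  conv_rhs => rw [← Multiset.coe_toList M]
  congr 1
  apply List.ext_getElem
  · simp [hM]
  · intro i h1 h2
    simp at h1 h2 ⊢
    simp [h2]

theorem eval_eq {n : ℕ} {s : (Fin n → ℝ) → ℝ} (hsym : IsSymmetricFn n s)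
    (f : Fin n → ℝ) : s f = evalMs n s ((Finset.univ : Finset (Fin n)).val.map f) := by
  apply symm_of_map_eq hsym
  rw [map_toList]
  simp

theorem eval_step {n : ℕ} {s : (Fin n → ℝ) → ℝ} (hsym : IsSymmetricFn n s)
    (haff : IsMultiaffine n s) (M : Multiset ℝ) (hM : M.card + 1 = n) (x y : ℝ) (hy : y ≠ 0) :
    evalMs n s (x ::ₘ M) = (1 - x / y) * evalMs n s (0 ::ₘ M) + x / y * evalMs n s (y ::ₘ M) := by
  subst hM
  set g : Fin M.card → ℝ := fun j => M.toList.getD (j : ℕ) 0 with hg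
  have key : ∀ z : ℝ, evalMs (M.card + 1) s (z ::ₘ M)
      = s (Function.update (Fin.cons 0 g : Fin (M.card + 1) → ℝ) 0 z) := by
    intro z
    rw [eval_eq hsym, Fin.update_cons_zero]
    congr 1
    rw [Fin.univ_val_map, List.ofFn_succ]
    simp only [Fin.cons_zero, Fin.cons_succ]
    rw [← Multiset.cons_coe, ← Fin.univ_val_map, hg, map_toList M rfl]
  obtain ⟨a, b, hab⟩ := haff 0 (Fin.cons 0 g : Fin (M.card + 1) → ℝ)
  rw [key, key, key, hab, hab, hab]
  field_simp
  ring

/-- Nodes. -/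
noncomputable def nodes (n : ℕ) (p q : ℝ) (i : ℕ) : Multiset ℝ :=
  (Multiset.range i).map (fun a => p ^ (n - 1 - a) * q ^ a)

theorem nodes_succ (n : ℕ) (p q : ℝ) (i : ℕ) :
    nodes n p q (i + 1) = (p ^ (n - 1 - i) * q ^ i) ::ₘ nodes n p q i := by
  simp [nodes, Multiset.range_succ]

theorem nodes_card (n : ℕ) (p q : ℝ) (i : ℕ) : (nodes n p q i).card = i := by
  simp [nodes]

theorem arg_multiset (n k i : ℕ) (p q : ℝ) (hk : k ≤ n) (hi : i ≤ n - k) (u : Fin k → ℝ) :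
    (Finset.univ : Finset (Fin n)).val.map (fun j : Fin n =>
        if hj : (j : ℕ) < n - k then
          (if (j : ℕ) < n - k - i then 0
            else p ^ (n - 1 - ((j : ℕ) - (n - k - i))) * q ^ ((j : ℕ) - (n - k - i)))
        else u ⟨(j : ℕ) - (n - k), by omega⟩)
    = Multiset.replicate (n - k - i) 0 + nodes n p q i
        + (Finset.univ : Finset (Fin k)).val.map u := by
  rw [Fin.univ_val_map, Fin.univ_val_map, nodes, ← Multiset.coe_range, Multiset.map_coe,
    ← Multiset.coe_replicate, Multiset.coe_add, Multiset.coe_add]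
  congr 1
  apply List.ext_getElem
  · simp; omega
  · intro j h1 h2
    simp only [List.getElem_append, List.getElem_ofFn, List.length_append, List.length_replicate,
      List.length_map, List.length_range, List.getElem_replicate, List.getElem_map,
      List.getElem_range]
    have e : n - k - i + i = n - k := by omega
    simp only [e]
    split_ifs <;> rfl

theorem pqInt_pos {p q : ℝ} (hp : 0 < p) (hq : 0 < q) (n : ℕ) : 0 < pqInt p q (n + 1) := by
  unfold pqInt
  apply Finset.sum_pos
  · intro i _; positivity
  · simp

theorem pqFact_pos {p q : ℝ} (hp : 0 < p) (hq : 0 < q) (n : ℕ) : 0 < pqFact p q n := by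
  induction n with
  | zero => simp [pqFact]
  | succ n ih => rw [pqFact]; exact mul_pos ih (pqInt_pos hp hq n)

theorem pqInt_add (p q : ℝ) (a b : ℕ) :
    pqInt p q (a + b) = p ^ a * pqInt p q b + q ^ b * pqInt p q a := by
  unfold pqInt
  rw [add_comm a b, Finset.sum_range_add, Finset.mul_sum, Finset.mul_sum]
  congr 1
  · apply Finset.sum_congr rfl
    intro j hj
    rw [Finset.mem_range] at hj
    rw [show b + a - 1 - j = a + (b - 1 - j) by omega, pow_add]; ring
  · apply Finset.sum_congr rfl
    intro j hj
    rw [Finset.mem_range] at hj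
    rw [show b + a - 1 - (b + j) = (a - 1 - j) by omega, pow_add]; ring

theorem pascal {p q : ℝ} (hp : 0 < p) (hq : 0 < q) (i j : ℕ) :
    pqBinom p q (i + j + 2) (i + 1) =
      p ^ (i + 1) * pqBinom p q (i + j + 1) (i + 1) + q ^ (j + 1) * pqBinom p q (i + j + 1) i := by
  unfold pqBinom
  rw [show i + j + 2 - (i + 1) = j + 1 by omega, show i + j + 1 - (i + 1) = j by omega,
    show i + j + 1 - i = j + 1 by omega]
  have e : pqFact p q (i + j + 2) = pqFact p q (i + j + 1) *
      (p ^ (i + 1) * pqInt p q (j + 1) + q ^ (j + 1) * pqInt p q (i + 1)) := by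
    rw [← pqInt_add, show i + 1 + (j + 1) = i + j + 1 + 1 by ring]; rfl
  have e1 : pqFact p q (i + 1) = pqFact p q i * pqInt p q (i + 1) := rfl
  have e2 : pqFact p q (j + 1) = pqFact p q j * pqInt p q (j + 1) := rfl
  rw [e, e1, e2]
  have h1 := (pqFact_pos hp hq i).ne'
  have h2 := (pqFact_pos hp hq j).ne'
  have h3 := (pqInt_pos hp hq i).ne'
  have h4 := (pqInt_pos hp hq j).ne'
  field_simp

theorem tri (n : ℕ) : (n + 1) * (n + 1 - 1) / 2 = n * (n - 1) / 2 + n := by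
  rw [Nat.triangle_succ]

theorem bern_rec {p q : ℝ} (hp : 0 < p) (hq : 0 < q) (t : ℝ) (i j : ℕ) :
    pqBernstein p q (i + j + 2) (i + 1) t =
      pqBernstein p q (i + j + 1) (i + 1) t * (1 - (q / p) ^ j * t)
      + pqBernstein p q (i + j + 1) i t * ((q / p) ^ (j + 1) * t) := by
  unfold pqBernstein
  rw [pascal hp hq, show i + j + 2 - (i + 1) = j + 1 by omega,
    show i + j + 1 - (i + 1) = j by omega,
    show i + j + 1 - i = j + 1 by omega, tri i, show i + j + 2 = i + j + 1 + 1 by ring,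
    tri (i + j + 1), Finset.prod_range_succ]
  generalize i * (i - 1) / 2 = A
  generalize (i + j + 1) * (i + j + 1 - 1) / 2 = B
  generalize ∏ s ∈ Finset.range j, (p ^ s - q ^ s * t) = C
  generalize pqBinom p q (i + j + 1) i = X
  generalize pqBinom p q (i + j + 1) (i + 1) = Y
  rw [div_pow, div_pow]
  field_simp
  ring

theorem bern_diag {p q : ℝ} (hp : 0 < p) (hq : 0 < q) (t : ℝ) (i : ℕ) :
    pqBernstein p q i i t = t ^ i := by
  unfold pqBernstein pqBinom
  have h1 := (pqFact_pos hp hq i).ne'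
  simp [pqFact]
  field_simp

theorem bern_zero {p q : ℝ} (hp : 0 < p) (hq : 0 < q) (t : ℝ) (m : ℕ) :
    pqBernstein p q (m + 1) 0 t = pqBernstein p q m 0 t * (1 - (q / p) ^ m * t) := by
  unfold pqBernstein pqBinom
  have h1 := (pqFact_pos hp hq m).ne'
  have h2 := (pqFact_pos hp hq (m + 1)).ne'
  rw [tri]
  simp only [Nat.sub_zero, Finset.prod_range_succ, div_pow]
  simp only [show pqFact p q 0 = 1 from rfl, one_mul, div_self h1, div_self h2]
  simp
  field_simp
  ring

theorem bern_sum {p q : ℝ} (hp : 0 < p) (hq : 0 < q) (t : ℝ) (m : ℕ) (F : ℕ → ℝ) :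
    ∑ i ∈ Finset.range (m + 2), pqBernstein p q (m + 1) i t * F i =
    ∑ i ∈ Finset.range (m + 1), pqBernstein p q m i t *
      ((1 - (q / p) ^ (m - i) * t) * F i + (q / p) ^ (m - i) * t * F (i + 1)) := by
  have h : ∀ i ∈ Finset.range m, pqBernstein p q (m + 1) (i + 1) t * F (i + 1) =
      pqBernstein p q m (i + 1) t * (1 - (q / p) ^ (m - (i + 1)) * t) * F (i + 1)
      + pqBernstein p q m i t * ((q / p) ^ (m - i) * t) * F (i + 1) := by
    intro i hi
    rw [Finset.mem_range] at hi
    obtain ⟨j, rfl⟩ : ∃ j, m = i + j + 1 := ⟨m - i - 1, by omega⟩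
    rw [bern_rec hp hq, show i + j + 1 - (i + 1) = j by omega,
      show i + j + 1 - i = j + 1 by omega]
    ring
  rw [Finset.sum_range_succ, Finset.sum_range_succ', Finset.sum_congr rfl h,
    Finset.sum_add_distrib, bern_diag hp hq, bern_zero hp hq]
  simp only [mul_add, Finset.sum_add_distrib]
  rw [Finset.sum_range_succ' (fun i => pqBernstein p q m i t *
      ((1 - (q / p) ^ (m - i) * t) * F i)),
    Finset.sum_range_succ (fun i => pqBernstein p q m i t *
      ((q / p) ^ (m - i) * t * F (i + 1))), bern_diag hp hq]
  simp only [Nat.sub_self, pow_zero, Nat.sub_zero, mul_assoc]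
  ring

/-- Remaining diagonal arguments. -/
noncomputable def rest (n : ℕ) (p q t : ℝ) (m : ℕ) : Multiset ℝ :=
  (Finset.Ico m n).val.map (fun a => p ^ (n - 1 - a) * q ^ a * t)

theorem rest_step (n : ℕ) (p q t : ℝ) (m : ℕ) (h : m < n) :
    rest n p q t m = (p ^ (n - 1 - m) * q ^ m * t) ::ₘ rest n p q t (m + 1) := by
  unfold rest
  rw [← Finset.insert_Ico_add_one_left_eq_Ico h, Finset.insert_val_of_notMem (by simp)]
  simp

theorem rest_card (n : ℕ) (p q t : ℝ) (m : ℕ) : (rest n p q t m).card = n - m := by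
  simp [rest]

theorem expansion {n : ℕ} {p q : ℝ} (hp : 0 < p) (hq : 0 < q) {s : (Fin n → ℝ) → ℝ}
    (hsym : IsSymmetricFn n s) (haff : IsMultiaffine n s) (t : ℝ) (m : ℕ) (hm : m ≤ n) :
    s (fun i => p ^ (n - 1 - (i : ℕ)) * q ^ (i : ℕ) * t) =
    ∑ i ∈ Finset.range (m + 1), pqBernstein p q m i t *
      evalMs n s (Multiset.replicate (m - i) 0 + nodes n p q i + rest n p q t m) := by
  induction m with
  | zero =>
    rw [eval_eq hsym]
    simp only [zero_add, Finset.sum_range_one, bern_diag hp hq, pow_zero, one_mul, Nat.sub_self,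
      Multiset.replicate_zero]
    congr 1
    simp only [nodes, Multiset.range_zero, Multiset.map_zero, zero_add, rest]
    rw [Fin.univ_val_map]
    rw [show (Finset.Ico 0 n).val = ((List.range n : List ℕ) : Multiset ℕ) by
      rw [Nat.Ico_zero_eq_range]; rfl, Multiset.map_coe]
    congr 1
    apply List.ext_getElem <;> simp
  | succ m ih =>
    rw [ih (by omega), bern_sum hp hq]
    apply Finset.sum_congr rfl
    intro i hi
    rw [Finset.mem_range] at hi
    congr 1
    have hy : p ^ (n - 1 - i) * q ^ i ≠ 0 := by positivity
    have := eval_step hsym haff (Multiset.replicate (m - i) 0 + nodes n p q i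
      + rest n p q t (m + 1)) (by
        simp only [Multiset.card_add, Multiset.card_replicate, nodes_card, rest_card]; omega)
      (p ^ (n - 1 - m) * q ^ m * t) _ hy
    have e : p ^ (n - 1 - m) * q ^ m * t / (p ^ (n - 1 - i) * q ^ i) = (q / p) ^ (m - i) * t := by
      obtain ⟨j, rfl⟩ : ∃ j, m = i + j := ⟨m - i, by omega⟩
      rw [show n - 1 - i = (n - 1 - (i + j)) + j by omega, show i + j - i = j by omega, div_pow,
        pow_add, pow_add]
      field_simp
    rw [e] at this
    rw [rest_step n p q t m (by omega), Multiset.add_cons, this, nodes_succ,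
      show m + 1 - i = (m - i) + 1 by omega, Multiset.replicate_succ,
      show m + 1 - (i + 1) = m - i by omega]
    simp only [Multiset.cons_add, Multiset.add_cons]

theorem bern_root {p q : ℝ} (hp : 0 < p) (hq : 0 < q) (n i m : ℕ) (h : m < n - i) :
    pqBernstein p q n i ((p / q) ^ m) = 0 := by
  unfold pqBernstein
  rw [Finset.prod_eq_zero (Finset.mem_range.2 h), mul_zero]
  rw [div_pow]; field_simp; ring

theorem bern_ne {p q : ℝ} (hq : 0 < q) (hqp : q < p) (n i : ℕ) :
    pqBernstein p q n i ((p / q) ^ (n - i)) ≠ 0 := by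
  have hp := hq.trans hqp
  unfold pqBernstein pqBinom
  have h1 := (pqFact_pos hp hq n).ne'
  have h2 := (pqFact_pos hp hq i).ne'
  have h3 := (pqFact_pos hp hq (n - i)).ne'
  refine mul_ne_zero (by positivity) (Finset.prod_ne_zero_iff.2 ?_)
  intro a ha
  rw [Finset.mem_range] at ha
  have h4 : (p / q) ^ a < (p / q) ^ (n - i) :=
    pow_lt_pow_right₀ (by rw [lt_div_iff₀ hq]; linarith) ha
  rw [div_pow, div_lt_iff₀ (by positivity)] at h4
  rw [mul_comm]
  linarith

theorem bern_indep {p q : ℝ} (hq : 0 < q) (hqp : q < p) (n : ℕ) (F G : ℕ → ℝ)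
    (h : ∀ t, ∑ i ∈ Finset.range (n + 1), F i * pqBernstein p q n i t =
      ∑ i ∈ Finset.range (n + 1), G i * pqBernstein p q n i t) :
    ∀ m ≤ n, F (n - m) = G (n - m) := by
  have hp := hq.trans hqp
  intro m
  induction m using Nat.strong_induction_on with
  | _ m ih =>
    intro hm
    have h1 := sub_eq_zero.2 (h ((p / q) ^ m))
    rw [← Finset.sum_sub_distrib, Finset.sum_eq_single (n - m)] at h1
    · have h2 := bern_ne hq hqp n (n - m)
      rw [show n - (n - m) = m by omega] at h2
      rw [← sub_mul] at h1
      exact sub_eq_zero.1 ((mul_eq_zero.1 h1).resolve_right h2)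
    · intro b hb hne
      rw [Finset.mem_range] at hb
      by_cases hlt : m < n - b
      · rw [bern_root hp hq n b m hlt]; ring
      · have := ih (n - b) (by omega) (by omega)
        rw [show n - (n - b) = b by omega] at this
        rw [this, sub_self]
    · intro hh
      simp at hh

/-- recursive evaluation of the (p,q)-blossom from the control points.
With `Q_i^0 = P_i` and
`Q_i^{k+1}(u_1, …, u_{k+1}) = (1 - u_{k+1} p^{i+1-n} q^{-i}) Q_i^k(u_1, …, u_k)
  + u_{k+1} p^{i+1-n} q^{-i} Q_{i+1}^k(u_1, …, u_k)`,
one has `Q_i^k(u_1, …, u_k) = s(0, …, 0, p^{n-1}, p^{n-2}q, …, p^{n-i}q^{i-1}, u_1, …, u_k)`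
(first `n-k-i` arguments zero); in particular `Q_0^n = s`. -/
theorem pq_blossom_recursive_evaluation (n : ℕ) (hn : 1 ≤ n)
    (p q : ℝ) (h0 : 0 < q) (hqp : q < p)
    (P : ℕ → ℝ) (S : ℝ → ℝ)
    (hS : ∀ t : ℝ, S t = ∑ i ∈ Finset.range (n + 1), P i * pqBernstein p q n i t)
    (s : (Fin n → ℝ) → ℝ)
    (hsym : IsSymmetricFn n s) (haff : IsMultiaffine n s)
    (hdiag : ∀ t : ℝ, s (fun i => p ^ (n - 1 - (i : ℕ)) * q ^ (i : ℕ) * t) = S t)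
    (Q : (k : ℕ) → ℕ → (Fin k → ℝ) → ℝ)
    (hQ0 : ∀ i ≤ n, ∀ u : Fin 0 → ℝ, Q 0 i u = P i)
    (hQrec : ∀ k, k < n → ∀ i, i ≤ n - k - 1 → ∀ u : Fin (k + 1) → ℝ,
      Q (k + 1) i u =
        (1 - u (Fin.last k) * p ^ ((i : ℤ) + 1 - n) * q ^ (-(i : ℤ))) *
            Q k i (fun j => u j.castSucc) +
          u (Fin.last k) * p ^ ((i : ℤ) + 1 - n) * q ^ (-(i : ℤ)) *
            Q k (i + 1) (fun j => u j.castSucc)) :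
    (∀ k, (hk : k ≤ n) → ∀ i, i ≤ n - k → ∀ u : Fin k → ℝ,
      Q k i u = s (fun j : Fin n =>
        if hj : (j : ℕ) < n - k then
          (if (j : ℕ) < n - k - i then 0
            else p ^ (n - 1 - ((j : ℕ) - (n - k - i))) * q ^ ((j : ℕ) - (n - k - i)))
        else u ⟨(j : ℕ) - (n - k), by omega⟩)) ∧
      ∀ u : Fin n → ℝ, Q n 0 u = s u := by
  have hp := h0.trans hqp
  have hP : ∀ i ≤ n, P i = evalMs n s (Multiset.replicate (n - i) 0 + nodes n p q i) := by
    intro i hi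
    have := bern_indep h0 hqp n P
      (fun i => evalMs n s (Multiset.replicate (n - i) 0 + nodes n p q i)) (by
        intro t
        rw [← hS, ← hdiag, expansion hp h0 hsym haff t n le_rfl]
        apply Finset.sum_congr rfl
        intro i _
        rw [mul_comm]
        simp [rest]) (n - i) (by omega)
    rwa [show n - (n - i) = i by omega] at this
  have main : ∀ k, k ≤ n → ∀ i, i ≤ n - k → ∀ u : Fin k → ℝ,
      Q k i u = evalMs n s (Multiset.replicate (n - k - i) 0 + nodes n p q i
        + (Finset.univ : Finset (Fin k)).val.map u) := by
    intro k
    induction k with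
    | zero =>
      intro _ i hi u
      rw [hQ0 i (by omega), hP i (by omega)]
      simp
    | succ k ih =>
      intro hk i hi u
      rw [hQrec k (by omega) i (by omega), ih (by omega) i (by omega),
        ih (by omega) (i + 1) (by omega)]
      have hu : (Finset.univ : Finset (Fin (k + 1))).val.map u =
          u (Fin.last k) ::ₘ (Finset.univ : Finset (Fin k)).val.map (fun j => u j.castSucc) := by
        rw [Fin.univ_val_map, Fin.univ_val_map, List.ofFn_succ_last, ← Multiset.coe_add,
          add_comm]
        rfl
      have hy : p ^ (n - 1 - i) * q ^ i ≠ 0 := by positivity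
      have := eval_step hsym haff (Multiset.replicate (n - (k + 1) - i) 0 + nodes n p q i
        + (Finset.univ : Finset (Fin k)).val.map (fun j => u j.castSucc)) (by
          simp only [Multiset.card_add, Multiset.card_replicate, nodes_card, Multiset.card_map,
            Finset.card_val, Finset.card_univ, Fintype.card_fin]; omega)
        (u (Fin.last k)) _ hy
      have e : u (Fin.last k) / (p ^ (n - 1 - i) * q ^ i) =
          u (Fin.last k) * p ^ ((i : ℤ) + 1 - n) * q ^ (-(i : ℤ)) := by
        rw [show (i : ℤ) + 1 - n = -((n - 1 - i : ℕ) : ℤ) by omega, zpow_neg, zpow_neg,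
          zpow_natCast, zpow_natCast]
        field_simp
      rw [e] at this
      rw [hu, Multiset.add_cons, this, nodes_succ,
        show n - k - i = (n - (k + 1) - i) + 1 by omega, Multiset.replicate_succ,
        show n - k - (i + 1) = n - (k + 1) - i by omega]
      simp only [Multiset.cons_add, Multiset.add_cons]
  refine ⟨?_, ?_⟩
  · intro k hk i hi u
    rw [main k hk i hi u, eval_eq hsym, arg_multiset n k i p q hk hi u]
  · intro u
    rw [main n le_rfl 0 (by omega) u, eval_eq hsym u]
    simp [nodes]
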